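/- arXiv:2305.02070 — 6 statements merged into one kernel-verified Lean document; each statement's English description precedes it below -/
import Mathlib

section
/- Let 𝓡 be a ratio-covariety, let S ∈ 𝓡, and define the sequence S_0 = S and S_{n+1} = S_n \ {r(S_n)} if S_n ≠ min(𝓡), S_{n+1} = min(𝓡) otherwise. Then every S_n belongs to 𝓡, and there exists k ∈ ℕ such that min(𝓡) = S_k ⊊ S_{k-1} ⊊ ⋯ ⊊ S_0 = S, and moreover the cardinality of S_i \ S_{i+1} equals 1 for every i ∈ {0, 1, …, k−1}. -/
/-!
Removing `ratio T` from a non-minimal `T ∈ R` yields a member of `R`, hence a numerical semigroup,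
which contains `0`. So `ratio T ≠ 0`, which forces `ratio T` to be a genuine infimum attained in `T`
(the junk value `sInf ∅ = 0`, occurring for `T = ℕ`, is excluded). Each step before reaching `M`
therefore removes exactly one element of the set `seq n \ M`, which is finite because `M` has finite
complement, so `M` is reached; `k` is the first index at which this happens.
-/

/-- A numerical semigroup: a submonoid of (ℕ,+) with finite complement. -/
def IsNumericalSemigroup (S : Set ℕ) : Prop :=
  0 ∈ S ∧ (∀ a ∈ S, ∀ b ∈ S, a + b ∈ S) ∧ Sᶜ.Finite

/-- The multiplicity m(S): least positive element of S. -/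
noncomputable def mult (S : Set ℕ) : ℕ := sInf {s | s ∈ S ∧ s ≠ 0}

/-- The ratio r(S): least s ∈ S not divisible by the multiplicity. -/
noncomputable def ratio (S : Set ℕ) : ℕ := sInf {s | s ∈ S ∧ ¬ mult S ∣ s}

/-- The Frobenius number F(S): largest integer not in S. -/
noncomputable def frob (S : Set ℕ) : ℕ := sSup Sᶜ

/-- The genus g(S): number of gaps of S. -/
noncomputable def genus (S : Set ℕ) : ℕ := Sᶜ.ncard

/-- Pseudo-Frobenius numbers of S. -/
def PF (S : Set ℕ) : Set ℕ := {x | x ∉ S ∧ ∀ s ∈ S, s ≠ 0 → x + s ∈ S}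

/-- Special gaps of S. -/
def SG (S : Set ℕ) : Set ℕ := {x | x ∈ PF S ∧ 2 * x ∈ S}

/-- The Apéry set of n in S: elements s of S with s - n ∉ S (as integers). -/
def Ap (S : Set ℕ) (n : ℕ) : Set ℕ := {s | s ∈ S ∧ ¬ ∃ t ∈ S, t + n = s}

/-- The minimal system of generators of a numerical semigroup:
    nonzero elements not expressible as a sum of two nonzero elements. -/
def msg (S : Set ℕ) : Set ℕ :=
  {x | x ∈ S ∧ x ≠ 0 ∧ ∀ a ∈ S, ∀ b ∈ S, a ≠ 0 → b ≠ 0 → x ≠ a + b}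

/-- The embedding dimension e(S). -/
noncomputable def edim (S : Set ℕ) : ℕ := (msg S).ncard

/-- The submonoid of ℕ generated by a set A. -/
def closureSet (A : Set ℕ) : Set ℕ := (AddSubmonoid.closure A : Set ℕ)

/-- M is the minimum of the family R with respect to inclusion. -/
def IsMinOf (R : Set (Set ℕ)) (M : Set ℕ) : Prop := M ∈ R ∧ ∀ S ∈ R, M ⊆ S

/-- A ratio-covariety. -/
def IsRatioCovariety (R : Set (Set ℕ)) : Prop :=
  R.Nonempty ∧ (∀ S ∈ R, IsNumericalSemigroup S) ∧
  (∃ M, IsMinOf R M) ∧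
  (∀ S ∈ R, ∀ T ∈ R, S ∩ T ∈ R) ∧
  (∀ S ∈ R, ∀ M, IsMinOf R M → S ≠ M → S \ {ratio S} ∈ R)

/-- The family 𝓡(F,m) of numerical semigroups with Frobenius number F and multiplicity m. -/
def RFm (F m : ℕ) : Set (Set ℕ) :=
  {S | IsNumericalSemigroup S ∧ frob S = F ∧ mult S = m}

/-- Δ(F,m) = ⟨m⟩ ∪ {F+1, →}. -/
def Delta (F m : ℕ) : Set ℕ := {n | m ∣ n} ∪ {n | F < n}

/-- X is an 𝓡-set: disjoint from min(𝓡) and contained in some element of 𝓡. -/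
def IsRSet (R : Set (Set ℕ)) (X : Set ℕ) : Prop :=
  (∀ M, IsMinOf R M → X ∩ M = ∅) ∧ ∃ S ∈ R, X ⊆ S

/-- 𝓡[X]: the intersection of all elements of 𝓡 containing X. -/
def RGen (R : Set (Set ℕ)) (X : Set ℕ) : Set ℕ := ⋂₀ {S | S ∈ R ∧ X ⊆ S}

/-- The 𝓡-rank of S. -/
noncomputable def Rrank (R : Set (Set ℕ)) (S : Set ℕ) : ℕ :=
  sInf {n | ∃ X, IsRSet R X ∧ RGen R X = S ∧ X.ncard = n}

/-- The covariety axiom itself rules out the empty-infimum case of `ratio`: deleting `0` would not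
leave a submonoid. -/
lemma ratio_mem_of_ne_min {R : Set (Set ℕ)} (hR : IsRatioCovariety R) {M T : Set ℕ}
    (hM : IsMinOf R M) (hT : T ∈ R) (hne : T ≠ M) : ratio T ∈ T := by
  obtain ⟨-, hsg, -, -, hdel⟩ := hR
  have h0 : (0 : ℕ) ∈ T \ {ratio T} := (hsg _ (hdel T hT M hM hne)).1
  have hne0 : ratio T ≠ 0 := fun h => h0.2 h.symm
  have hnonempty : {s | s ∈ T ∧ ¬ mult T ∣ s}.Nonempty := by
    by_contra h
    rw [Set.not_nonempty_iff_eq_empty] at h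
    exact hne0 (by rw [ratio, h, Nat.sInf_empty])
  exact (Nat.sInf_mem hnonempty).1

theorem ratio_covariety_sequence (R : Set (Set ℕ)) (hR : IsRatioCovariety R)
    (M : Set ℕ) (hM : IsMinOf R M) (S : Set ℕ) (hS : S ∈ R)
    (seq : ℕ → Set ℕ) (h0 : seq 0 = S)
    (hrec : ∀ n, (seq n ≠ M → seq (n + 1) = seq n \ {ratio (seq n)}) ∧
      (seq n = M → seq (n + 1) = M)) :
    (∀ n, seq n ∈ R) ∧
    ∃ k, seq k = M ∧ (∀ i < k, seq (i + 1) ⊂ seq i) ∧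
      (∀ i < k, (seq i \ seq (i + 1)).ncard = 1) := by
  have hmem : ∀ n, seq n ∈ R := by
    intro n
    induction n with
    | zero => rwa [h0]
    | succ n ih =>
      by_cases h : seq n = M
      · rw [(hrec n).2 h]; exact hM.1
      · rw [(hrec n).1 h]; exact hR.2.2.2.2 _ ih M hM h
  have hratio : ∀ n, seq n ≠ M → ratio (seq n) ∈ seq n :=
    fun n h => ratio_mem_of_ne_min hR hM (hmem n) h
  have hfin : ∀ n, (seq n \ M).Finite := fun n =>
    (hR.2.1 M hM.1).2.2.subset fun _ hx => hx.2
  have hssub : ∀ n, seq n ≠ M → seq (n + 1) ⊂ seq n := by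
    intro n h
    rw [(hrec n).1 h]
    exact Set.sdiff_singleton_ssubset.2 (hratio n h)
  have hreach : ∃ k, seq k = M := by
    by_contra! hnever
    have hbound : ∀ n, (seq n \ M).ncard + n ≤ (seq 0 \ M).ncard := by
      intro n
      induction n with
      | zero => simp
      | succ n ih =>
        have hlt : (seq (n + 1) \ M).ncard < (seq n \ M).ncard := by
          refine Set.ncard_lt_ncard ?_ (hfin n)
          refine ⟨Set.sdiff_subset_sdiff_left (hssub n (hnever n)).1, fun hsub => ?_⟩
          refine (hssub n (hnever n)).2 fun x hx => ?_
          by_cases hxM : x ∈ M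
          · exact hM.2 _ (hmem (n + 1)) hxM
          · exact (hsub ⟨hx, hxM⟩).1
        omega
    have := hbound ((seq 0 \ M).ncard + 1)
    omega
  classical
  refine ⟨hmem, Nat.find hreach, Nat.find_spec hreach,
    fun i hi => hssub i (Nat.find_min hreach hi), fun i hi => ?_⟩
  have hne := Nat.find_min hreach hi
  rw [(hrec i).1 hne, Set.sdiff_sdiff_cancel_left
    (Set.singleton_subset_iff.2 (hratio i hne)), Set.ncard_singleton]
end

section
/- Let m < F be positive integers with m not dividing F. Then 𝓡(F,m) is a ratio-covariety: it is nonempty, it has a minimum element with respect to inclusion, it is closed under pairwise intersections, and for every S ∈ 𝓡(F,m) different from its minimum, S \ {r(S)} ∈ 𝓡(F,m). -/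
/-- Elementwise description of `RFm F m`. Positivity of `F` rules out `S = ℕ`, for which `frob`
takes the junk value `0`. -/
theorem mem_RFm_iff {m F : ℕ} (hm : 0 < m) (hF : 0 < F) (S : Set ℕ) :
    S ∈ RFm F m ↔ 0 ∈ S ∧ (∀ a ∈ S, ∀ b ∈ S, a + b ∈ S) ∧ F ∉ S ∧ (∀ n, F < n → n ∈ S) ∧
      m ∈ S ∧ ∀ s ∈ S, s ≠ 0 → m ≤ s := by
  constructor
  · rintro ⟨⟨h0, hadd, hfin⟩, hfrob, hmult⟩
    have hne : Sᶜ.Nonempty := by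
      by_contra h
      rw [Set.not_nonempty_iff_eq_empty] at h
      simp [frob, h] at hfrob
      omega
    have hFS : F ∈ Sᶜ := hfrob ▸ Nat.sSup_mem hne hfin.bddAbove
    have hmne : {s | s ∈ S ∧ s ≠ 0}.Nonempty := by
      by_contra h
      rw [Set.not_nonempty_iff_eq_empty] at h
      simp only [mult, h, Nat.sInf_empty] at hmult
      omega
    have hmS : m ∈ {s | s ∈ S ∧ s ≠ 0} := hmult ▸ Nat.sInf_mem hmne
    refine ⟨h0, hadd, hFS, fun n hn => ?_, hmS.1, fun s hs hs0 => ?_⟩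
    · by_contra h
      have h1 : n ≤ frob S := le_csSup hfin.bddAbove h
      omega
    · rw [← hmult]
      exact Nat.sInf_le ⟨hs, hs0⟩
  · rintro ⟨h0, hadd, hFS, hbig, hmS, hmin⟩
    have hub : ∀ n ∈ Sᶜ, n ≤ F := fun n hn => by
      by_contra h
      exact hn (hbig n (by omega))
    refine ⟨⟨h0, hadd, (Set.finite_Iic F).subset hub⟩, ?_, ?_⟩
    · exact IsGreatest.csSup_eq ⟨hFS, hub⟩
    · exact IsLeast.csInf_eq ⟨⟨hmS, hm.ne'⟩, fun s hs => hmin s hs.1 hs.2⟩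

theorem Delta_isMinOf {m F : ℕ} (hm : 0 < m) (hmF : m < F) (hdvd : ¬ m ∣ F) :
    IsMinOf (RFm F m) (Delta F m) := by
  constructor
  · rw [mem_RFm_iff hm (by omega)]
    refine ⟨Or.inl (dvd_zero m), ?_, ?_, fun n hn => Or.inr hn, Or.inl dvd_rfl, ?_⟩
    · rintro a (ha | ha) b (hb | hb)
      · exact Or.inl (dvd_add ha hb)
      all_goals
        refine Or.inr ?_
        simp only [Set.mem_setOf_eq] at *
        omega
    · rintro (h | h)
      · exact hdvd h
      · exact lt_irrefl F h
    · rintro s (h | h) h0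
      · exact Nat.le_of_dvd (Nat.pos_of_ne_zero h0) h
      · exact (hmF.trans h).le
  · intro S hS
    rw [mem_RFm_iff hm (by omega)] at hS
    obtain ⟨h0, hadd, -, hbig, hmS, -⟩ := hS
    rintro n (⟨k, rfl⟩ | h)
    · induction k with
      | zero => simpa using h0
      | succ k ih => exact hadd _ ih _ hmS
    · exact hbig n h

theorem RFm_is_ratio_covariety (m F : ℕ) (hm : 0 < m) (hmF : m < F) (hdvd : ¬ m ∣ F) :
    IsRatioCovariety (RFm F m) := by
  have hF : 0 < F := hm.trans hmF
  have hD := Delta_isMinOf hm hmF hdvd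
  refine ⟨⟨_, hD.1⟩, fun S hS => hS.1, ⟨_, hD⟩, fun S hS T hT => ?_, fun S hS M hM hne => ?_⟩
  · rw [mem_RFm_iff hm hF] at hS hT ⊢
    obtain ⟨h0, hadd, hFS, hbig, hmS, hmin⟩ := hS
    obtain ⟨h0', hadd', -, hbig', hmT, -⟩ := hT
    exact ⟨⟨h0, h0'⟩, fun a ha b hb => ⟨hadd a ha.1 b hb.1, hadd' a ha.2 b hb.2⟩,
      fun h => hFS h.1, fun n hn => ⟨hbig n hn, hbig' n hn⟩, ⟨hmS, hmT⟩,
      fun s hs => hmin s hs.1⟩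
  · have hMD : M = Delta F m := (hM.2 _ hD.1).antisymm (hD.2 _ hM.1)
    obtain ⟨x, hxS, hxD⟩ : ∃ x ∈ S, x ∉ Delta F m := by
      by_contra! h
      exact hne (Set.Subset.antisymm h (hD.2 S hS) |>.trans hMD.symm)
    have hxm : ¬ m ∣ x := fun h => hxD (Or.inl h)
    have hxF : ¬ F < x := fun h => hxD (Or.inr h)
    have hmult : mult S = m := hS.2.2
    have hr : ratio S ∈ {s | s ∈ S ∧ ¬ mult S ∣ s} := Nat.sInf_mem ⟨x, hxS, hmult ▸ hxm⟩
    have hrmin : ∀ s ∈ S, s < ratio S → m ∣ s := fun s hs hlt => by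
      by_contra h
      have : ratio S ≤ s := Nat.sInf_le ⟨hs, hmult ▸ h⟩
      omega
    have hrx : ratio S ≤ x := Nat.sInf_le ⟨hxS, hmult ▸ hxm⟩
    rw [hmult] at hr
    obtain ⟨hrS, hrm⟩ := hr
    generalize ratio S = r at *
    rw [mem_RFm_iff hm hF] at hS ⊢
    obtain ⟨h0, hadd, hFS, hbig, hmS, hmin⟩ := hS
    refine ⟨⟨h0, ?_⟩, ?_, fun h => hFS h.1, fun n hn => ⟨hbig n hn, ?_⟩, ⟨hmS, ?_⟩,
      fun s hs => hmin s hs.1⟩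
    · rintro rfl
      exact hrm (dvd_zero m)
    · rintro a ⟨ha, har⟩ b ⟨hb, hbr⟩
      refine ⟨hadd a ha b hb, fun h => hrm ?_⟩
      simp only [Set.mem_singleton_iff] at har hbr h
      rw [← h]
      exact dvd_add (hrmin a ha (by omega)) (hrmin b hb (by omega))
    · simp only [Set.mem_singleton_iff]
      omega
    · rintro rfl
      exact hrm dvd_rfl
end

section
/- Let S be a numerical semigroup, let n ∈ S \ {0}, and let x ∈ SG(S). Then x + n ∈ Ap(S,n), the set S ∪ {x} is a numerical semigroup, and Ap(S ∪ {x}, n) = (Ap(S,n) \ {x + n}) ∪ {x}. -/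
theorem apery_of_union_special_gap (S : Set ℕ) (hS : IsNumericalSemigroup S)
    (n : ℕ) (hn : n ∈ S) (hn0 : n ≠ 0) (x : ℕ) (hx : x ∈ SG S) :
    x + n ∈ Ap S n ∧ IsNumericalSemigroup (S ∪ {x}) ∧
      Ap (S ∪ {x}) n = (Ap S n \ {x + n}) ∪ {x} := by
  obtain ⟨h0, hadd, hfin⟩ := hS
  obtain ⟨⟨hxS, hxadd⟩, h2x⟩ := hx
  refine ⟨⟨hxadd n hn hn0, ?_⟩, ⟨Or.inl h0, ?_, ?_⟩, ?_⟩
  · rintro ⟨t, ht, h⟩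
    exact hxS (Nat.add_right_cancel h ▸ ht)
  · -- only `x + 0` among the sums `x + s` falls outside `S`
    have key : ∀ s ∈ S, x + s ∈ S ∪ {x} := by
      intro s hs
      by_cases h : s = 0
      · exact Or.inr (by simp [h])
      · exact Or.inl (hxadd s hs h)
    rintro a (ha | rfl) b (hb | rfl)
    · exact Or.inl (hadd a ha b hb)
    · exact add_comm a b ▸ key a ha
    · exact key b hb
    · exact Or.inl (two_mul b ▸ h2x)
  · exact hfin.subset (Set.compl_subset_compl.mpr Set.subset_union_left)
  · ext s
    constructor
    · rintro ⟨hs | hs, hns⟩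
      · refine Or.inl ⟨⟨hs, fun ⟨t, ht, h⟩ => hns ⟨t, Or.inl ht, h⟩⟩, fun h => ?_⟩
        exact hns ⟨x, Or.inr rfl, h.symm⟩
      · exact Or.inr hs
    · rintro (⟨⟨hs, hns⟩, hne⟩ | rfl)
      · refine ⟨Or.inl hs, ?_⟩
        rintro ⟨t, ht | rfl, h⟩
        · exact hns ⟨t, ht, h⟩
        · exact hne h.symm
      · refine ⟨Or.inr rfl, ?_⟩
        rintro ⟨t, ht | rfl, h⟩
        -- `t ∈ S` would put `s = t + n` in `S`; `t = s` would force `n = 0`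
        · exact hxS (h ▸ hadd t ht n hn)
        · omega
end

section
/- Let 𝓡 be a ratio-covariety and let S ∈ 𝓡. Then the 𝓡-rank of S is at most the embedding dimension e(S) of S. -/
/-- For a fixed positive `m ∈ S`, a minimal generator above `m` is a gap of `S` shifted by `m`,
and there are only finitely many gaps. -/
lemma msg_finite {S : Set ℕ} (hS : IsNumericalSemigroup S) : (msg S).Finite := by
  have hinf : S.Infinite := by
    intro h
    exact Set.infinite_univ (by simpa using h.union hS.2.2)
  obtain ⟨m, hm, hm0⟩ := hinf.exists_gt 0
  refine ((Set.finite_Iic m).union (hS.2.2.image (· + m))).subset ?_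
  rintro x ⟨-, -, hx⟩
  by_cases h : x ≤ m
  · exact Or.inl h
  · refine Or.inr ⟨x - m, fun hxm => ?_, by simp only; omega⟩
    exact hx (x - m) hxm m hm (by omega) (by omega) (by omega)

lemma subset_of_msg_subset {S T : Set ℕ} (hT : IsNumericalSemigroup T) (h : msg S ⊆ T) :
    S ⊆ T := by
  intro x
  induction x using Nat.strong_induction_on with
  | _ x ih =>
    intro hx
    by_cases hx0 : x = 0
    · exact hx0 ▸ hT.1
    by_cases hxm : x ∈ msg S
    · exact h hxm
    · have hdec : ∃ a ∈ S, ∃ b ∈ S, a ≠ 0 ∧ b ≠ 0 ∧ x = a + b := by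
        by_contra! hc
        exact hxm ⟨hx, hx0, hc⟩
      obtain ⟨a, ha, b, hb, ha0, hb0, rfl⟩ := hdec
      exact hT.2.1 a (ih a (by omega) ha) b (ih b (by omega) hb)

theorem Rrank_le_edim (R : Set (Set ℕ)) (hR : IsRatioCovariety R)
    (S : Set ℕ) (hS : S ∈ R) :
    Rrank R S ≤ edim S := by
  obtain ⟨-, hNS, ⟨M, hM⟩, -, -⟩ := hR
  have hXS : msg S \ M ⊆ S := fun x hx => hx.1.1
  have hrank : Rrank R S ≤ (msg S \ M).ncard := by
    refine Nat.sInf_le ⟨msg S \ M, ⟨fun M' hM' => ?_, S, hS, hXS⟩, ?_, rfl⟩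
    · obtain rfl : M' = M := (hM'.2 M hM.1).antisymm (hM.2 M' hM'.1)
      exact Set.sdiff_inter_self
    · refine Set.Subset.antisymm (Set.sInter_subset_of_mem ⟨hS, hXS⟩) (Set.subset_sInter ?_)
      rintro T ⟨hT, hXT⟩
      refine subset_of_msg_subset (hNS T hT) fun x hx => ?_
      by_cases hxM : x ∈ M
      · exact hM.2 T hT hxM
      · exact hXT ⟨hx, hxM⟩
  exact hrank.trans (Set.ncard_le_ncard Set.sdiff_subset (msg_finite (hNS S hS)))
end

section
/- Let 𝓡 be a ratio-covariety and let S ∈ 𝓡 with S ≠ ℕ. Then the 𝓡-rank of S equals 1 if and only if {r(S)} is an 𝓡-set and S = 𝓡[{r(S)}]. -/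
/-- For `S ≠ ℕ` the set whose infimum defines `ratio S` is nonempty, so `ratio S` is not the junk
value `sInf ∅ = 0`. -/
theorem ratio_mem (S : Set ℕ) (h : IsNumericalSemigroup S) (hu : S ≠ Set.univ) :
    ratio S ∈ S := by
  obtain ⟨h0, hadd, hfin⟩ := h
  have meet : ∀ T : Set ℕ, T.Infinite → ∃ x ∈ T, x ∈ S := by
    intro T hT
    by_contra! hc
    exact hT (hfin.subset hc)
  have hm : mult S ∈ S ∧ mult S ≠ 0 := by
    obtain ⟨x, hx, hxS⟩ := meet (Set.Ioi 0) (Set.Ioi_infinite 0)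
    exact Nat.sInf_mem (s := {s | s ∈ S ∧ s ≠ 0}) ⟨x, hxS, (Set.mem_Ioi.1 hx).ne'⟩
  have hm1 : mult S ≠ 1 := by
    intro h1
    apply hu
    ext n
    simp only [Set.mem_univ, iff_true]
    induction n with
    | zero => exact h0
    | succ k ih => exact hadd k ih 1 (h1 ▸ hm.1)
  -- The residue class of `1` modulo `mult S` is infinite, hence meets the cofinite set `S`.
  have hinf : (Set.range fun k : ℕ => mult S * k + 1).Infinite := by
    refine Set.infinite_range_of_injective fun a b hab => ?_
    exact Nat.eq_of_mul_eq_mul_left (Nat.pos_of_ne_zero hm.2) (Nat.succ.inj hab)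
  obtain ⟨x, ⟨k, rfl⟩, hxS⟩ := meet _ hinf
  refine (Nat.sInf_mem (s := {s | s ∈ S ∧ ¬ mult S ∣ s}) ⟨_, hxS, fun hd => hm1 ?_⟩).1
  exact Nat.dvd_one.1 ((Nat.dvd_add_right (dvd_mul_right _ _)).1 hd)

theorem subset_RGen (R : Set (Set ℕ)) (X : Set ℕ) : X ⊆ RGen R X :=
  Set.subset_sInter fun _ hT => hT.2

theorem Rrank_eq_one_iff (R : Set (Set ℕ)) (hR : IsRatioCovariety R)
    (S : Set ℕ) (hS : S ∈ R) (hSuniv : S ≠ Set.univ) :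
    Rrank R S = 1 ↔ IsRSet R {ratio S} ∧ S = RGen R {ratio S} := by
  obtain ⟨-, hns, ⟨M, hM⟩, -, hrem⟩ := hR
  constructor
  · intro h
    have hne : {n | ∃ X, IsRSet R X ∧ RGen R X = S ∧ X.ncard = n}.Nonempty :=
      Nat.nonempty_of_sInf_eq_succ h
    obtain ⟨X, hX, hXS, hc⟩ := Nat.sInf_mem hne
    change X.ncard = Rrank R S at hc
    rw [h] at hc
    obtain ⟨x, rfl⟩ := Set.ncard_eq_one.1 hc
    have hxS : x ∈ S := hXS ▸ subset_RGen R {x} rfl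
    have hxM : x ∉ M := fun hx => by
      have : x ∈ ({x} ∩ M : Set ℕ) := ⟨rfl, hx⟩
      rw [hX.1 M hM] at this
      exact this
    have hSM : S ≠ M := fun e => hxM (e ▸ hxS)
    have hx : x = ratio S := by
      by_contra hne
      have hr : ratio S ∈ RGen R {x} := hXS.symm ▸ ratio_mem S (hns S hS) hSuniv
      exact (hr (S \ {ratio S})
        ⟨hrem S hS M hM hSM, Set.singleton_subset_iff.2 ⟨hxS, hne⟩⟩).2 rfl
    rw [← hx]
    exact ⟨hX, hXS.symm⟩
  · rintro ⟨hr, hS'⟩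
    have h1 : (1 : ℕ) ∈ {n | ∃ X, IsRSet R X ∧ RGen R X = S ∧ X.ncard = n} :=
      ⟨_, hr, hS'.symm, Set.ncard_singleton _⟩
    have hle : Rrank R S ≤ 1 := Nat.sInf_le h1
    have h0 : Rrank R S ≠ 0 := by
      intro h
      obtain ⟨X, hX, hXS, hc⟩ := Nat.sInf_mem ⟨1, h1⟩
      change X.ncard = Rrank R S at hc
      rw [h] at hc
      -- Finiteness of `X` excludes the junk value `ncard = 0` of infinite sets.
      have hXfin : X.Finite := (hns M hM.1).2.2.subset fun x hx hxM => by
        have : x ∈ X ∩ M := ⟨hx, hxM⟩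
        rw [hX.1 M hM] at this
        exact this
      obtain rfl := (Set.ncard_eq_zero hXfin).1 hc
      have hrS : ratio S ∈ RGen R ∅ := by
        rw [hXS]
        exact hS'.symm.subset (subset_RGen R {ratio S} rfl)
      have : ratio S ∈ ({ratio S} ∩ M : Set ℕ) := ⟨rfl, hrS M ⟨hM.1, Set.empty_subset _⟩⟩
      rw [hr.1 M hM] at this
      exact this
    omega
end

section
/- Let m < F be positive integers with m not dividing F and let S ∈ 𝓡(F,m). Then the 𝓡(F,m)-rank of S is at most m − 2. -/
theorem mem_of_frob_lt {F m : ℕ} {S : Set ℕ} (hS : S ∈ RFm F m) {n : ℕ} (hn : F < n) : n ∈ S := by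
  obtain ⟨⟨-, -, hfin⟩, hF, -⟩ := hS
  by_contra h
  have : n ≤ sSup Sᶜ := le_csSup hfin.bddAbove h
  rw [frob] at hF
  omega

theorem frob_notMem {F m : ℕ} (hF0 : 0 < F) {S : Set ℕ} (hS : S ∈ RFm F m) : F ∉ S := by
  obtain ⟨⟨-, -, hfin⟩, hF, -⟩ := hS
  rw [frob] at hF
  have hne : Sᶜ.Nonempty := by
    -- `sSup ∅ = 0`, so an empty complement would contradict `0 < F`.
    rw [Set.nonempty_iff_ne_empty]
    intro h
    simp [h] at hF
    omega
  have := Nat.sSup_mem hne hfin.bddAbove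
  rwa [hF] at this

theorem mult_mem {F m : ℕ} (hm : 0 < m) {S : Set ℕ} (hS : S ∈ RFm F m) : m ∈ S := by
  obtain ⟨-, -, hmult⟩ := hS
  rw [mult] at hmult
  have : sInf {s | s ∈ S ∧ s ≠ 0} ∈ {s | s ∈ S ∧ s ≠ 0} :=
    Nat.sInf_mem (Nat.nonempty_of_pos_sInf (by omega))
  rw [hmult] at this
  exact this.1

theorem add_mul_mult_mem {F m : ℕ} (hm : 0 < m) {S : Set ℕ} (hS : S ∈ RFm F m) {s : ℕ}
    (hs : s ∈ S) (k : ℕ) : s + m * k ∈ S := by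
  induction k with
  | zero => simpa using hs
  | succ k ih =>
    rw [Nat.mul_succ, ← add_assoc]
    exact hS.1.2.1 _ ih _ (mult_mem hm hS)

theorem Delta_subset {F m : ℕ} (hm : 0 < m) {S : Set ℕ} (hS : S ∈ RFm F m) :
    Delta F m ⊆ S := by
  rintro n (⟨k, rfl⟩ | hn)
  · simpa using add_mul_mult_mem hm hS hS.1.1 k
  · exact mem_of_frob_lt hS hn

theorem Delta_mem_RFm {F m : ℕ} (hm : 0 < m) (hmF : m < F) (hdvd : ¬ m ∣ F) :
    Delta F m ∈ RFm F m := by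
  have hgap : ∀ n ∈ (Delta F m)ᶜ, n ≤ F := by
    intro n hn
    by_contra h
    exact hn (Or.inr (not_le.mp h))
  have hF : F ∈ (Delta F m)ᶜ := by
    rintro (h | h)
    · exact hdvd h
    · exact lt_irrefl F h
  refine ⟨⟨Or.inl (dvd_zero m), ?_, (Set.finite_Iic F).subset hgap⟩, ?_, ?_⟩
  · rintro a (ha | ha) b (hb | hb)
    · exact Or.inl (dvd_add ha hb)
    all_goals
      simp only [Set.mem_ofPred_eq] at ha hb
      exact Or.inr (show F < a + b by omega)
  · exact IsGreatest.csSup_eq ⟨hF, hgap⟩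
  · refine IsLeast.csInf_eq ⟨⟨Or.inl (dvd_refl m), hm.ne'⟩, ?_⟩
    rintro n ⟨h | h, hn⟩
    · exact Nat.le_of_dvd (Nat.pos_of_ne_zero hn) h
    · exact (hmF.trans h).le

/-- Two elements of the Apéry set of `m` that are congruent modulo `m` coincide. -/
theorem injOn_mod_Ap {F m : ℕ} (hm : 0 < m) {S : Set ℕ} (hS : S ∈ RFm F m) :
    Set.InjOn (· % m) (Ap S m) := by
  have key : ∀ x ∈ Ap S m, ∀ y ∈ Ap S m, x % m = y % m → ¬ x < y := by
    intro x hx y hy hxy hlt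
    obtain ⟨k, hk⟩ := (Nat.modEq_iff_dvd' hlt.le).mp hxy
    obtain _ | k := k
    · omega
    · refine hy.2 ⟨x + m * k, add_mul_mult_mem hm hS hx.1 k, ?_⟩
      rw [Nat.mul_succ] at hk
      omega
  intro x hx y hy hxy
  have h₁ := key x hx y hy hxy
  have h₂ := key y hy x hx hxy.symm
  omega

theorem ncard_Ap_diff_Delta_le {F m : ℕ} (hm : 0 < m) (hmF : m < F) (hdvd : ¬ m ∣ F) {S : Set ℕ}
    (hS : S ∈ RFm F m) : (Ap S m \ Delta F m).ncard ≤ m - 2 := by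
  have hFm : F % m ≠ 0 := fun h => hdvd (Nat.dvd_of_mod_eq_zero h)
  have hcard : (((Finset.range m).erase 0).erase (F % m)).card = m - 2 := by
    rw [Finset.card_erase_of_mem, Finset.card_erase_of_mem, Finset.card_range]
    · omega
    · simpa using hm
    · simpa [hFm] using Nat.mod_lt F hm
  rw [← hcard, ← Set.ncard_coe_finset]
  refine Set.ncard_le_ncard_of_injOn (· % m) ?_ ((injOn_mod_Ap hm hS).mono Set.sdiff_subset)
    (Finset.finite_toSet _)
  rintro x ⟨hx, hxD⟩
  have hxF : x ≤ F := by
    by_contra h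
    exact hxD (Or.inr (not_le.mp h))
  simp only [Finset.mem_coe, Finset.mem_erase, Finset.mem_range]
  refine ⟨fun h => ?_, fun h => hxD (Or.inl (Nat.dvd_of_mod_eq_zero h)), Nat.mod_lt x hm⟩
  obtain ⟨k, hk⟩ := (Nat.modEq_iff_dvd' hxF).mp h
  have hmem := add_mul_mult_mem hm hS hx.1 k
  rw [← hk, Nat.add_sub_cancel' hxF] at hmem
  exact frob_notMem (hm.trans hmF) hS hmem

theorem RGen_Ap_diff_Delta {F m : ℕ} (hm : 0 < m) {S : Set ℕ} (hS : S ∈ RFm F m) :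
    RGen (RFm F m) (Ap S m \ Delta F m) = S := by
  apply Set.Subset.antisymm
  · exact Set.sInter_subset_of_mem ⟨hS, fun x hx => hx.1.1⟩
  · rintro s hs T ⟨hT, hXT⟩
    induction s using Nat.strong_induction_on with
    | _ s ih =>
      by_cases hsD : s ∈ Delta F m
      · exact Delta_subset hm hT hsD
      by_cases hdec : ∃ t ∈ S, t + m = s
      · obtain ⟨t, ht, rfl⟩ := hdec
        exact hT.1.2.1 _ (ih t (by omega) ht) _ (mult_mem hm hT)
      · exact hXT ⟨⟨hs, hdec⟩, hsD⟩

theorem Rrank_le_mult_sub_two (m F : ℕ) (hm : 0 < m) (hmF : m < F) (hdvd : ¬ m ∣ F)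
    (S : Set ℕ) (hS : S ∈ RFm F m) :
    Rrank (RFm F m) S ≤ m - 2 := by
  refine le_trans (Nat.sInf_le ⟨Ap S m \ Delta F m, ⟨?_, S, hS, fun x hx => hx.1.1⟩,
    RGen_Ap_diff_Delta hm hS, rfl⟩) (ncard_Ap_diff_Delta_le hm hmF hdvd hS)
  intro M hM
  ext x
  simp only [Set.mem_inter_iff, Set.mem_empty_iff_false, iff_false, not_and]
  exact fun hx hxM => hx.2 (hM.2 _ (Delta_mem_RFm hm hmF hdvd) hxM)
end
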